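/- arXiv:1804.07213 — 2 statements merged into one kernel-verified Lean document; each statement's English description precedes it below -/
import Mathlib

section
/- Let F(x) = f(x) + P₁(x) − P₂(x) be level-bounded, let {x^k} and {ξ^k} be the sequences generated by pDCA_e for minimizing F, and let Υ be the set of accumulation points of {(x^k, ξ^k, x^{k−1})}. Then the limit ζ := lim_{k→∞} E(x^k, ξ^k, x^{k−1}) exists, and E is identically equal to ζ on Υ. -/
/-!
Let `F = f + P₁ - P₂`. The Fenchel–Young inequality gives `F x + L/2 ‖x - w‖² ≤ E(x, y, w)`. For
the reverse direction, `ξᵏ⁺¹ ∈ ∂P₂(xᵏ)` makes the conjugate explicit, and the descent lemma, the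
strong convexity of the proximal subproblem and the gradient inequality for `f` give
`E(xᵏ⁺¹, ξᵏ⁺¹, xᵏ) ≤ F xᵏ + L/2 ‖xᵏ - uᵏ‖²`. As `‖xᵏ - uᵏ‖ = βₖ ‖xᵏ - xᵏ⁻¹‖` with `βₖ ≤ B < 1`,
each iteration decreases `E` by at least `L/2 (1 - B²) ‖xᵏ - xᵏ⁻¹‖²`. Since `F` is bounded below,
`E` converges to a real number `ζ` and `xᵏ⁺¹ - xᵏ → 0`.

Consequently `uᵏ` has the same limits as `xᵏ` along any filter, and every accumulation point has the
form `(a, b, a)` with `b ∈ ∂P₂(a)`. There `P₁`, a priori only lower semicontinuous, is continuous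
along the iterates: comparing `xᵏ⁺¹` with `a` in the subproblem bounds `P₁ xᵏ⁺¹` above by a
quantity that tends to `P₁ a`. Hence `E(xᵏ⁺¹, ξᵏ⁺¹, xᵏ)` tends to `E(a, b, a)` along any filter
realizing the accumulation point, so `E(a, b, a) = ζ`.
-/

open Filter Topology Set Metric Bornology
open scoped RealInnerProductSpace

noncomputable section

abbrev Eucl (n : ℕ) := EuclideanSpace ℝ (Fin n)

variable {H : Type*} [NormedAddCommGroup H] [InnerProductSpace ℝ H]

/-- Fréchet (regular) subgradient of an extended-real-valued function. -/
def FrechetSubgradAt (h : H → EReal) (v x : H) : Prop :=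
  ∀ ε : ℝ, 0 < ε →
    ∀ᶠ y in 𝓝[≠] x, h x + ((⟪v, y - x⟫ - ε * ‖y - x‖ : ℝ) : EReal) ≤ h y

/-- Limiting (Mordukhovich) subdifferential. -/
def limSubdiff (h : H → EReal) (x : H) : Set H :=
  {v | ∃ xs vs : ℕ → H,
    Tendsto xs atTop (𝓝 x) ∧
    Tendsto (fun k => h (xs k)) atTop (𝓝 (h x)) ∧
    Tendsto vs atTop (𝓝 v) ∧
    ∀ k, FrechetSubgradAt h (vs k) (xs k)}

/-- Convex subgradient of a real-valued function. -/
def ConvexSubgradAt (g : H → ℝ) (v x : H) : Prop :=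
  ∀ y, g x + ⟪v, y - x⟫ ≤ g y

/-- Convex subgradient of an extended-real-valued function. -/
def ConvexSubgradAtE (g : H → EReal) (v x : H) : Prop :=
  ∀ y, g x + ((⟪v, y - x⟫ : ℝ) : EReal) ≤ g y

/-- Convex conjugate of a real-valued function. -/
def conjE (g : H → ℝ) (y : H) : EReal :=
  ⨆ x : H, ((⟪x, y⟫ - g x : ℝ) : EReal)

/-- `P` is proper, closed (lsc) and convex. -/
def ProperClosedConvexE (P : H → EReal) : Prop :=
  (∀ x, P x ≠ ⊥) ∧ (∃ x, P x ≠ ⊤) ∧ LowerSemicontinuous P ∧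
  (∀ x y : H, ∀ t : ℝ, t ∈ Ioo (0:ℝ) 1 →
    P (t • x + (1 - t) • y) ≤ (t : EReal) * P x + ((1 - t : ℝ) : EReal) * P y)

/-- KL property with exponent `α` at a point. -/
def KLExpAt (h : H → EReal) (α : ℝ) (x₀ : H) : Prop :=
  ∃ c > (0:ℝ), ∃ ε > (0:ℝ), ∃ a > (0:ℝ), ∀ x : H,
    ‖x - x₀‖ ≤ ε → h x₀ < h x → h x < h x₀ + (a : EReal) →
    (limSubdiff h x).Nonempty →
    1 ≤ c * (1 - α) * ((h x).toReal - (h x₀).toReal) ^ (-α) * infDist 0 (limSubdiff h x)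

/-- KL function with exponent `α`. -/
def IsKLWithExp (h : H → EReal) (α : ℝ) : Prop :=
  ∀ x₀ : H, (limSubdiff h x₀).Nonempty → KLExpAt h α x₀

/-- KL property (general desingularizing function) at a point. -/
def KLAt (h : H → EReal) (x₀ : H) : Prop :=
  ∃ a > (0:ℝ), ∃ U ∈ 𝓝 x₀, ∃ φ φd : ℝ → ℝ,
    ContinuousOn φ (Ico 0 a) ∧ ConcaveOn ℝ (Ico 0 a) φ ∧ φ 0 = 0 ∧
    (∀ s ∈ Ico (0:ℝ) a, 0 ≤ φ s) ∧
    (∀ s ∈ Ioo (0:ℝ) a, HasDerivAt φ (φd s) s ∧ 0 < φd s) ∧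
    ∀ x ∈ U, h x₀ < h x → h x < h x₀ + (a : EReal) → (limSubdiff h x).Nonempty →
      1 ≤ φd ((h x).toReal - (h x₀).toReal) * infDist 0 (limSubdiff h x)

/-- KL function. -/
def IsKLFun (h : H → EReal) : Prop :=
  ∀ x₀ : H, (limSubdiff h x₀).Nonempty → KLAt h x₀

/-- The potential function `E(x,y,w) = f(x) + P₁(x) - ⟨x,y⟩ + P₂*(y) + L/2 ‖x-w‖²`. -/
def potE (f : H → ℝ) (P₁ : H → EReal) (P₂ : H → ℝ) (L : ℝ) (x y w : H) : EReal :=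
  ((f x : ℝ) : EReal) + P₁ x - ((⟪x, y⟫ : ℝ) : EReal) + conjE P₂ y
    + ((L / 2 * ‖x - w‖ ^ 2 : ℝ) : EReal)

/-- The pDCAe iteration: `ξ^{k+1} ∈ ∂P₂(x^k)`, `u^k = x^k + β_k (x^k - x^{k-1})` and
`x^{k+1}` is the minimizer of `⟨∇f(u^k) - ξ^{k+1}, ·⟩ + L/2 ‖· - u^k‖² + P₁(·)`.
(`x⁻¹ = x⁰` is encoded by truncated subtraction in `ℕ`.) -/
def IsPDCAe (f' : H → H) (P₁ : H → EReal) (P₂ : H → ℝ) (L : ℝ) (β : ℕ → ℝ)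
    (x ξ : ℕ → H) : Prop :=
  P₁ (x 0) ≠ ⊤ ∧
  (∀ k : ℕ, ConvexSubgradAt P₂ (ξ (k + 1)) (x k)) ∧
  (∀ k : ℕ, ∀ z : H,
    ((⟪f' (x k + β k • (x k - x (k - 1))) - ξ (k + 1), x (k + 1)⟫
        + L / 2 * ‖x (k + 1) - (x k + β k • (x k - x (k - 1)))‖ ^ 2 : ℝ) : EReal)
      + P₁ (x (k + 1))
      ≤ ((⟪f' (x k + β k • (x k - x (k - 1))) - ξ (k + 1), z⟫
        + L / 2 * ‖z - (x k + β k • (x k - x (k - 1)))‖ ^ 2 : ℝ) : EReal) + P₁ z)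

/-- Triples `(x, y, w)` with the ℓ² product inner product structure. -/
abbrev Trip (n : ℕ) := WithLp 2 (Eucl n × WithLp 2 (Eucl n × Eucl n))

def mkTrip {n : ℕ} (a b c : Eucl n) : Trip n :=
  (WithLp.equiv 2 _).symm (a, (WithLp.equiv 2 _).symm (b, c))

/-- `potE` as a function on triples. -/
def potE3 {n : ℕ} (f : Eucl n → ℝ) (P₁ : Eucl n → EReal) (P₂ : Eucl n → ℝ) (L : ℝ)
    (p : Trip n) : EReal :=
  potE f P₁ P₂ L ((WithLp.equiv 2 _) p).1 ((WithLp.equiv 2 _) ((WithLp.equiv 2 _) p).2).1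
    ((WithLp.equiv 2 _) ((WithLp.equiv 2 _) p).2).2

section ERealLemmas

theorem coe_add_le_coe_add_of_sub_le_sub {r r' s s' : ℝ} {p q : EReal}
    (h : (r : EReal) + p ≤ r' + q) (hsr : s - r ≤ s' - r') : (s : EReal) + p ≤ s' + q :=
  calc (s : EReal) + p ≤ ((s' - r' + r : ℝ) : EReal) + p := by
        gcongr
        linarith
    _ = ((s' - r' : ℝ) : EReal) + (r + p) := by rw [EReal.coe_add, add_assoc]
    _ ≤ ((s' - r' : ℝ) : EReal) + (r' + q) := by gcongr
    _ = s' + q := by rw [← add_assoc, ← EReal.coe_add, sub_add_cancel]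

theorem continuousAt_coe_add (r : ℝ) (p : EReal) :
    ContinuousAt (fun q : EReal × EReal => q.1 + q.2) ((r : EReal), p) :=
  EReal.continuousAt_add (.inl (EReal.coe_ne_top r)) (.inl (EReal.coe_ne_bot r))

theorem tendsto_coe_add {ι : Type*} {l : Filter ι} {r : ι → ℝ} {p : ι → EReal} {r₀ : ℝ}
    {p₀ : EReal} (hr : Tendsto r l (𝓝 r₀)) (hp : Tendsto p l (𝓝 p₀)) :
    Tendsto (fun i => (r i : EReal) + p i) l (𝓝 (r₀ + p₀)) :=
  (continuousAt_coe_add r₀ p₀).tendsto.comp ((EReal.tendsto_coe.2 hr).prodMk_nhds hp)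

theorem exists_forall_coe_le_of_isBounded_sublevel {X : Type*} [PseudoMetricSpace X]
    [ProperSpace X] {g : X → EReal} (hg : LowerSemicontinuous g) (hbot : ∀ x, g x ≠ ⊥) {c : ℝ}
    (hbdd : IsBounded {x | g x ≤ c}) : ∃ m : ℝ, ∀ x, (m : EReal) ≤ g x := by
  rcases {x | g x ≤ c}.eq_empty_or_nonempty with hempty | hne
  · exact ⟨c, fun x => (not_le.1 (eq_empty_iff_forall_notMem.1 hempty x)).le⟩
  have hcompact : IsCompact {x | g x ≤ c} :=
    isCompact_of_isClosed_isBounded (hg.isClosed_preimage c) hbdd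
  obtain ⟨a, hac, hmin⟩ := (hg.lowerSemicontinuousOn _).exists_isMinOn hne hcompact
  obtain ⟨m, -, hma⟩ := EReal.lt_iff_exists_real_btwn.1 (bot_lt_iff_ne_bot.2 (hbot a))
  refine ⟨m, fun x => ?_⟩
  rcases le_total (g x) c with hx | hx
  · exact hma.le.trans (hmin hx)
  · exact (hma.trans_le hac).le.trans hx

end ERealLemmas

theorem exists_tendsto_and_tendsto_zero_of_add_le {e d : ℕ → ℝ} (hd : ∀ k, 0 ≤ d k)
    (hstep : ∀ k, e (k + 1) + d k ≤ e k) (hbdd : BddBelow (range e)) :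
    (∃ ζ, Tendsto e atTop (𝓝 ζ)) ∧ Tendsto d atTop (𝓝 0) := by
  have hanti : Antitone e := antitone_nat_of_succ_le fun k => by linarith [hd k, hstep k]
  have hlim := tendsto_atTop_ciInf hanti hbdd
  have hgap : Tendsto (fun k => e k - e (k + 1)) atTop (𝓝 0) := by
    simpa only [sub_self] using hlim.sub ((tendsto_add_atTop_iff_nat 1).2 hlim)
  exact ⟨⟨_, hlim⟩, squeeze_zero hd (fun k => by linarith [hstep k]) hgap⟩

section Gradient

variable [CompleteSpace H] {f : H → ℝ}

theorem hasDerivAt_comp_lineMap_of_hasGradientAt {u z g : H} {t : ℝ}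
    (hf : HasGradientAt f g (AffineMap.lineMap u z t)) :
    HasDerivAt (fun s : ℝ => f (AffineMap.lineMap u z s)) ⟪g, z - u⟫ t :=
  (hf.hasFDerivAt.comp_hasDerivAt t AffineMap.hasDerivAt_lineMap).congr_deriv
    (InnerProductSpace.toDual_apply_apply ..)

theorem add_inner_le_of_convexOn_of_hasGradientAt {s : Set H} {u z g : H} (hf : ConvexOn ℝ s f)
    (hu : u ∈ s) (hz : z ∈ s) (hg : HasGradientAt f g u) : f u + ⟪g, z - u⟫ ≤ f z := by
  have hderiv : HasDerivAt (fun t : ℝ => f (AffineMap.lineMap u z t)) ⟪g, z - u⟫ 0 :=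
    hasDerivAt_comp_lineMap_of_hasGradientAt (by rwa [AffineMap.lineMap_apply_zero])
  have hslope := (hf.comp_affineMap (AffineMap.lineMap u z)).le_slope_of_hasDerivAt
    (x := (0 : ℝ)) (y := 1) (by simpa using hu) (by simpa using hz) one_pos hderiv
  simp only [slope_def_field, Function.comp_apply, AffineMap.lineMap_apply_one,
    AffineMap.lineMap_apply_zero, sub_zero, div_one] at hslope
  linarith

theorem le_add_inner_add_sq_of_lipschitz_gradient {f' : H → H} {L : ℝ}
    (hf : ∀ y, HasGradientAt f (f' y) y) (hlip : ∀ y z, ‖f' y - f' z‖ ≤ L * ‖y - z‖) (u z : H) :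
    f z ≤ f u + ⟪f' u, z - u⟫ + L / 2 * ‖z - u‖ ^ 2 := by
  have hderiv (t : ℝ) := hasDerivAt_comp_lineMap_of_hasGradientAt (hf (AffineMap.lineMap u z t))
  have hbound (t : ℝ) : HasDerivAt
      (fun s => f u + s * ⟪f' u, z - u⟫ + s ^ 2 * (L / 2 * ‖z - u‖ ^ 2))
      (⟪f' u, z - u⟫ + t * (L * ‖z - u‖ ^ 2)) t := by
    refine ((((hasDerivAt_id t).mul_const _).const_add (f u)).add
      ((hasDerivAt_pow 2 t).mul_const _)).congr_deriv ?_
    simp only [Nat.cast_ofNat, Nat.add_one_sub_one, pow_one]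
    ring
  have hderiv_le (t : ℝ) (ht : 0 ≤ t) :
      ⟪f' (AffineMap.lineMap u z t), z - u⟫ ≤ ⟪f' u, z - u⟫ + t * (L * ‖z - u‖ ^ 2) :=
    calc ⟪f' (AffineMap.lineMap u z t), z - u⟫
        = ⟪f' u, z - u⟫ + ⟪f' (AffineMap.lineMap u z t) - f' u, z - u⟫ := by
          rw [inner_sub_left]; ring
      _ ≤ ⟪f' u, z - u⟫ + L * ‖AffineMap.lineMap u z t - u‖ * ‖z - u‖ := by
          gcongr
          exact (real_inner_le_norm _ _).trans (by gcongr; exact hlip _ _)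
      _ = ⟪f' u, z - u⟫ + t * (L * ‖z - u‖ ^ 2) := by
          rw [AffineMap.lineMap_apply_module', add_sub_cancel_right, norm_smul,
            Real.norm_of_nonneg ht]
          ring
  simpa using image_le_of_deriv_right_le_deriv_boundary
    (fun t _ => (hderiv t).continuousAt.continuousWithinAt)
    (fun t _ => (hderiv t).hasDerivWithinAt) (by simp)
    (fun t _ => (hbound t).continuousAt.continuousWithinAt)
    (fun t _ => (hbound t).hasDerivWithinAt) (fun t ht => hderiv_le t ht.1)
    (right_mem_Icc.2 zero_le_one)

end Gradient

section ProximalMinimization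

theorem add_le_of_isMinOn_of_uniformConvexOn {E : Type*} [NormedAddCommGroup E] [NormedSpace ℝ E]
    {s : Set E} {φ : ℝ → ℝ} {g : E → ℝ} {m z : E} (hg : UniformConvexOn s φ g)
    (hmin : IsMinOn g s m) (hm : m ∈ s) (hz : z ∈ s) : g m + φ ‖z - m‖ ≤ g z := by
  have hsegment : ∀ t ∈ Ioo (0 : ℝ) 1, g m + (1 - t) * φ ‖z - m‖ ≤ g z := by
    intro t ⟨ht0, ht1⟩
    have hmem := hg.1 hz hm ht0.le (sub_nonneg.2 ht1.le) (add_sub_cancel t 1)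
    have hle := (hmin hmem).trans
      (hg.2 hz hm ht0.le (sub_nonneg.2 ht1.le) (add_sub_cancel t 1))
    simp only [smul_eq_mul] at hle
    exact le_of_mul_le_mul_left (by linarith) ht0
  have hlim : Tendsto (fun t : ℝ => g m + (1 - t) * φ ‖z - m‖) (𝓝[>] 0)
      (𝓝 (g m + φ ‖z - m‖)) := by
    refine tendsto_nhdsWithin_of_tendsto_nhds (Continuous.tendsto' (by fun_prop) _ _ ?_)
    simp only [sub_zero, one_mul]
  exact le_of_tendsto hlim
    (mem_of_superset (Ioo_mem_nhdsGT zero_lt_one) hsegment)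

theorem ProperClosedConvexE.convexOn_toReal {P : H → EReal} (hP : ProperClosedConvexE P) :
    ConvexOn ℝ {z | P z ≠ ⊤} fun z => (P z).toReal := by
  have hcoe {z : H} (hz : P z ≠ ⊤) : P z = (P z).toReal :=
    (EReal.coe_toReal hz (hP.1 z)).symm
  have hle {y z : H} (hy : P y ≠ ⊤) (hz : P z ≠ ⊤) {s t : ℝ} (hs : 0 < s) (ht : 0 < t)
      (hst : s + t = 1) :
      P (s • y + t • z) ≤ ((s * (P y).toReal + t * (P z).toReal : ℝ) : EReal) := by
    obtain rfl : t = 1 - s := by linarith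
    have := hP.2.2.2 y z s ⟨hs, by linarith⟩
    rw [hcoe hy, hcoe hz] at this
    exact_mod_cast this
  have hfinite {y z : H} (hy : P y ≠ ⊤) (hz : P z ≠ ⊤) {s t : ℝ} (hs : 0 < s) (ht : 0 < t)
      (hst : s + t = 1) : P (s • y + t • z) ≠ ⊤ :=
    ne_top_of_le_ne_top (EReal.coe_ne_top _) (hle hy hz hs ht hst)
  refine convexOn_iff_forall_pos.2 ⟨convex_iff_forall_pos.2 fun y hy z hz s t hs ht hst =>
    hfinite hy hz hs ht hst, fun y hy z hz s t hs ht hst => ?_⟩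
  rw [← EReal.coe_le_coe_iff, ← hcoe (hfinite hy hz hs ht hst)]
  exact hle hy hz hs ht hst

theorem ProperClosedConvexE.strongConvexOn_proxObjective {P : H → EReal}
    (hP : ProperClosedConvexE P) (L : ℝ) (v u : H) :
    StrongConvexOn {z | P z ≠ ⊤} L
      fun z => ⟪v, z⟫ + L / 2 * ‖z - u‖ ^ 2 + (P z).toReal := by
  rw [strongConvexOn_iff_convex]
  have hlinear : ConvexOn ℝ {z | P z ≠ ⊤} fun z => ⟪v - L • u, z⟫ :=
    (innerₛₗ ℝ (v - L • u)).convexOn hP.convexOn_toReal.1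
  refine ((hlinear.add hP.convexOn_toReal).add_const (L / 2 * ‖u‖ ^ 2)).congr fun z _ => ?_
  simp only [Pi.add_apply]
  rw [norm_sub_sq_real, inner_sub_left, real_inner_smul_left, real_inner_comm z u]
  ring

/-- `m` minimizes the proximal objective `z ↦ ⟪v, z⟫ + L/2 ‖z - u‖² + P z`: the subproblem solved in
each iteration of the algorithm. -/
def IsProxMin (P : H → EReal) (L : ℝ) (v u m : H) : Prop :=
  ∀ z, ((⟪v, m⟫ + L / 2 * ‖m - u‖ ^ 2 : ℝ) : EReal) + P m
    ≤ ((⟪v, z⟫ + L / 2 * ‖z - u‖ ^ 2 : ℝ) : EReal) + P z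

namespace IsProxMin

variable {P : H → EReal} {L : ℝ} {v u m z : H}

theorem ne_top (hmin : IsProxMin P L v u m) (hz : P z ≠ ⊤) : P m ≠ ⊤ := by
  intro hm
  have hle := hmin z
  rw [hm, EReal.coe_add_top, top_le_iff] at hle
  exact EReal.add_ne_top (EReal.coe_ne_top _) hz hle

theorem add_sq_le (hmin : IsProxMin P L v u m) (hP : ProperClosedConvexE P) (z : H) :
    ((⟪v, m⟫ + L / 2 * ‖m - u‖ ^ 2 + L / 2 * ‖z - m‖ ^ 2 : ℝ) : EReal) + P m
      ≤ ((⟪v, z⟫ + L / 2 * ‖z - u‖ ^ 2 : ℝ) : EReal) + P z := by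
  by_cases hz : P z = ⊤
  · rw [hz, EReal.coe_add_top]
    exact le_top
  have hcoe {y : H} (hy : P y ≠ ⊤) : P y = (P y).toReal := (EReal.coe_toReal hy (hP.1 y)).symm
  have hm := hmin.ne_top hz
  have hmin_real : IsMinOn (fun y => ⟪v, y⟫ + L / 2 * ‖y - u‖ ^ 2 + (P y).toReal)
      {y | P y ≠ ⊤} m := by
    intro y hy
    have hle := hmin y
    rw [hcoe hm, hcoe hy] at hle
    exact_mod_cast hle
  have hgrowth := add_le_of_isMinOn_of_uniformConvexOn
    (hP.strongConvexOn_proxObjective L v u) hmin_real hm hz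
  rw [hcoe hm, hcoe hz]
  norm_cast
  linarith

theorem tendsto {ι : Type*} {l : Filter ι} {v u m : ι → H} {v₀ u₀ m₀ : H}
    (hmin : ∀ i, IsProxMin P L (v i) (u i) (m i)) (hP : LowerSemicontinuousAt P m₀)
    (hv : Tendsto v l (𝓝 v₀)) (hu : Tendsto u l (𝓝 u₀)) (hm : Tendsto m l (𝓝 m₀)) :
    Tendsto (fun i => P (m i)) l (𝓝 (P m₀)) := by
  set r : ι → ℝ := fun i =>
    ⟪v i, m₀⟫ + L / 2 * ‖m₀ - u i‖ ^ 2 - (⟪v i, m i⟫ + L / 2 * ‖m i - u i‖ ^ 2)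
  have hle (i : ι) : P (m i) ≤ r i + P m₀ := by
    have := coe_add_le_coe_add_of_sub_le_sub (hmin i m₀) (s := 0) (s' := r i) (by simp [r])
    rwa [EReal.coe_zero, zero_add] at this
  have hr : Tendsto r l (𝓝 0) := by
    have hcompetitor := (hv.inner (𝕜 := ℝ) (tendsto_const_nhds (x := m₀))).add
      (((hu.const_sub m₀).norm.pow 2).const_mul (L / 2))
    have hminimizer := (hv.inner (𝕜 := ℝ) hm).add (((hm.sub hu).norm.pow 2).const_mul (L / 2))
    simpa only [sub_self] using hcompetitor.sub hminimizer
  have hupper : Tendsto (fun i => (r i : EReal) + P m₀) l (𝓝 (P m₀)) := by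
    simpa only [EReal.coe_zero, zero_add] using tendsto_coe_add hr tendsto_const_nhds
  exact tendsto_order.2 ⟨fun c hc => hm.eventually (hP c hc), fun c hc =>
    (hupper.eventually_lt_const hc).mono fun i hi => (hle i).trans_lt hi⟩

end IsProxMin

end ProximalMinimization

section Potential

theorem ConvexSubgradAt.conjE_eq {g : H → ℝ} {y w : H} (hy : ConvexSubgradAt g y w) :
    conjE g y = ((⟪w, y⟫ - g w : ℝ) : EReal) := by
  refine le_antisymm (iSup_le fun z => EReal.coe_le_coe_iff.2 ?_)
    (le_iSup (fun x : H => ((⟪x, y⟫ - g x : ℝ) : EReal)) w)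
  have hsub := hy z
  rw [inner_sub_right, real_inner_comm, real_inner_comm w] at hsub
  linarith

theorem ConvexSubgradAt.of_tendsto {ι : Type*} {l : Filter ι} [l.NeBot] {g : H → ℝ}
    {y w : ι → H} {y₀ w₀ : H} (hsub : ∀ i, ConvexSubgradAt g (y i) (w i))
    (hg : ContinuousAt g w₀) (hy : Tendsto y l (𝓝 y₀)) (hw : Tendsto w l (𝓝 w₀)) :
    ConvexSubgradAt g y₀ w₀ := fun z =>
  le_of_tendsto' ((hg.tendsto.comp hw).add (hy.inner (hw.const_sub z))) fun i => hsub i z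

/-- The objective `F = f + P₁ - P₂` of the difference-of-convex program. -/
def dcObjective {X : Type*} (f : X → ℝ) (P₁ : X → EReal) (P₂ : X → ℝ) (z : X) : EReal :=
  ((f z : ℝ) : EReal) + P₁ z - ((P₂ z : ℝ) : EReal)

theorem dcObjective_eq_coe_add {X : Type*} (f : X → ℝ) (P₁ : X → EReal) (P₂ : X → ℝ) (z : X) :
    dcObjective f P₁ P₂ z = ((f z - P₂ z : ℝ) : EReal) + P₁ z := by
  rw [dcObjective, EReal.coe_sub, sub_eq_add_neg, sub_eq_add_neg, add_right_comm]

theorem exists_forall_coe_le_dcObjective {X : Type*} [PseudoMetricSpace X] [ProperSpace X]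
    {f P₂ : X → ℝ} {P₁ : X → EReal} (hf : Continuous f) (hP₁ : LowerSemicontinuous P₁)
    (hbot : ∀ z, P₁ z ≠ ⊥) (hP₂ : Continuous P₂) {c : ℝ}
    (hbdd : IsBounded {z | dcObjective f P₁ P₂ z ≤ c}) :
    ∃ m : ℝ, ∀ z, (m : EReal) ≤ dcObjective f P₁ P₂ z := by
  refine exists_forall_coe_le_of_isBounded_sublevel ?_ (fun z => ?_) hbdd
  · have hcont : Continuous fun z => ((f z - P₂ z : ℝ) : EReal) :=
      continuous_coe_real_ereal.comp (hf.sub hP₂)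
    simpa only [← dcObjective_eq_coe_add] using
      hcont.lowerSemicontinuous.add' hP₁ fun z => continuousAt_coe_add _ (P₁ z)
  · rw [dcObjective_eq_coe_add]
    exact EReal.add_ne_bot_iff.2 ⟨EReal.coe_ne_bot _, hbot z⟩

variable {f : H → ℝ} {P₁ : H → EReal} {P₂ : H → ℝ} {L : ℝ}

theorem dcObjective_add_sq_le_potE (a y w : H) :
    dcObjective f P₁ P₂ a + ((L / 2 * ‖a - w‖ ^ 2 : ℝ) : EReal) ≤ potE f P₁ P₂ L a y w := by
  have hfenchel : ((⟪a, y⟫ - P₂ a : ℝ) : EReal) ≤ conjE P₂ y :=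
    le_iSup (fun x : H => ((⟪x, y⟫ - P₂ x : ℝ) : EReal)) a
  calc dcObjective f P₁ P₂ a + ((L / 2 * ‖a - w‖ ^ 2 : ℝ) : EReal)
      = (f a : EReal) + P₁ a - (⟪a, y⟫ : ℝ) + ((⟪a, y⟫ - P₂ a : ℝ) : EReal)
          + ((L / 2 * ‖a - w‖ ^ 2 : ℝ) : EReal) := by
        rw [dcObjective, sub_eq_add_neg _ ((⟪a, y⟫ : ℝ) : EReal), add_assoc (_ + _) (-_),
          ← EReal.coe_neg, ← EReal.coe_add, neg_add_eq_sub, sub_sub_cancel_left, EReal.coe_neg,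
          ← sub_eq_add_neg]
    _ ≤ potE f P₁ P₂ L a y w := by
        unfold potE
        gcongr

theorem coe_le_potE_of_forall_coe_le_dcObjective (hL : 0 ≤ L) {m : ℝ}
    (hbdd : ∀ z, (m : EReal) ≤ dcObjective f P₁ P₂ z) (a y w : H) :
    (m : EReal) ≤ potE f P₁ P₂ L a y w :=
  calc (m : EReal) ≤ dcObjective f P₁ P₂ a := hbdd a
    _ ≤ dcObjective f P₁ P₂ a + ((L / 2 * ‖a - w‖ ^ 2 : ℝ) : EReal) :=
        le_add_of_nonneg_right (EReal.coe_nonneg.2 (by positivity))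
    _ ≤ potE f P₁ P₂ L a y w := dcObjective_add_sq_le_potE a y w

theorem ConvexSubgradAt.potE_eq {y z : H} (hy : ConvexSubgradAt P₂ y z) (a w : H) :
    potE f P₁ P₂ L a y w
      = ((f a - P₂ z - ⟪y, a - z⟫ + L / 2 * ‖a - w‖ ^ 2 : ℝ) : EReal) + P₁ a := by
  have hreal : f a - P₂ z - ⟪y, a - z⟫ + L / 2 * ‖a - w‖ ^ 2
      = f a + -⟪a, y⟫ + (⟪z, y⟫ - P₂ z) + L / 2 * ‖a - w‖ ^ 2 := by
    rw [inner_sub_right, real_inner_comm, real_inner_comm z]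
    ring
  rw [potE, hy.conjE_eq, hreal, sub_eq_add_neg, ← EReal.coe_neg]
  simp only [EReal.coe_add, add_right_comm _ (P₁ a)]

theorem IsProxMin.potE_le_dcObjective_add_sq [CompleteSpace H] {f' : H → H}
    (hfconv : ConvexOn ℝ univ f) (hfgrad : ∀ y, HasGradientAt f (f' y) y)
    (hflip : ∀ y z, ‖f' y - f' z‖ ≤ L * ‖y - z‖) (hP₁ : ProperClosedConvexE P₁) {a u y z : H}
    (hmin : IsProxMin P₁ L (f' u - y) u a) (hy : ConvexSubgradAt P₂ y z) :
    potE f P₁ P₂ L a y z ≤ dcObjective f P₁ P₂ z + ((L / 2 * ‖z - u‖ ^ 2 : ℝ) : EReal) := by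
  have hdescent := le_add_inner_add_sq_of_lipschitz_gradient hfgrad hflip u a
  have hgradient := add_inner_le_of_convexOn_of_hasGradientAt hfconv (mem_univ u) (mem_univ z)
    (hfgrad u)
  rw [hy.potE_eq, dcObjective_eq_coe_add, add_right_comm, ← EReal.coe_add]
  refine coe_add_le_coe_add_of_sub_le_sub (hmin.add_sq_le hP₁ z) ?_
  rw [norm_sub_rev z a]
  simp only [inner_sub_left, inner_sub_right] at hdescent hgradient ⊢
  linarith

end Potential

section PDCAe

/-- The extrapolated point `uᵏ = xᵏ + βₖ (xᵏ - xᵏ⁻¹)`; truncated subtraction encodes `x⁻¹ = x⁰`. -/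
def extrapolation (β : ℕ → ℝ) (x : ℕ → H) (k : ℕ) : H :=
  x k + β k • (x k - x (k - 1))

theorem sq_norm_sub_extrapolation_succ (β : ℕ → ℝ) (x : ℕ → H) (k : ℕ) :
    ‖x (k + 1) - extrapolation β x (k + 1)‖ ^ 2 = β (k + 1) ^ 2 * ‖x (k + 1) - x k‖ ^ 2 := by
  rw [extrapolation, sub_add_cancel_left, norm_neg, norm_smul, mul_pow, Real.norm_eq_abs, sq_abs,
    Nat.add_sub_cancel]

theorem tendsto_extrapolation {β : ℕ → ℝ} {x : ℕ → H} {B : ℝ} (hβ : ∀ k, |β k| ≤ B)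
    (hdiff : Tendsto (fun k => x (k + 1) - x k) atTop (𝓝 0)) {l : Filter ℕ} (hl : l ≤ atTop)
    {a : H} (hx : Tendsto x l (𝓝 a)) : Tendsto (extrapolation β x) l (𝓝 a) := by
  have hback : Tendsto (fun k => x k - x (k - 1)) atTop (𝓝 0) :=
    (tendsto_add_atTop_iff_nat 1).1 (by simpa only [Nat.add_sub_cancel] using hdiff)
  have hmomentum : Tendsto (fun k => β k • (x k - x (k - 1))) atTop (𝓝 0) := by
    refine squeeze_zero_norm (a := fun k => B * ‖x k - x (k - 1)‖) (fun k => ?_) ?_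
    · rw [norm_smul, Real.norm_eq_abs]
      gcongr
      exact hβ k
    · simpa only [norm_zero, mul_zero] using hback.norm.const_mul B
  rw [← add_zero a]
  exact hx.add (hmomentum.mono_left hl)

namespace IsPDCAe

variable {f : H → ℝ} {f' : H → H} {P₁ : H → EReal} {P₂ : H → ℝ} {L B : ℝ} {β : ℕ → ℝ}
  {x ξ : ℕ → H}

theorem convexSubgradAt (hseq : IsPDCAe f' P₁ P₂ L β x ξ) (k : ℕ) :
    ConvexSubgradAt P₂ (ξ (k + 1)) (x k) :=
  hseq.2.1 k

theorem isProxMin (hseq : IsPDCAe f' P₁ P₂ L β x ξ) (k : ℕ) :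
    IsProxMin P₁ L (f' (extrapolation β x k) - ξ (k + 1)) (extrapolation β x k) (x (k + 1)) :=
  hseq.2.2 k

theorem potE_ne_top (hseq : IsPDCAe f' P₁ P₂ L β x ξ) (k : ℕ) :
    potE f P₁ P₂ L (x (k + 1)) (ξ (k + 1)) (x k) ≠ ⊤ := by
  rw [(hseq.convexSubgradAt k).potE_eq]
  exact EReal.add_ne_top (EReal.coe_ne_top _) ((hseq.isProxMin k).ne_top hseq.1)

theorem potE_succ_add_sq_le [CompleteSpace H] (hseq : IsPDCAe f' P₁ P₂ L β x ξ) (hL : 0 ≤ L)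
    (hfconv : ConvexOn ℝ univ f) (hfgrad : ∀ y, HasGradientAt f (f' y) y)
    (hflip : ∀ y z, ‖f' y - f' z‖ ≤ L * ‖y - z‖) (hP₁ : ProperClosedConvexE P₁)
    (hβ : ∀ k, |β k| ≤ B) (k : ℕ) :
    potE f P₁ P₂ L (x (k + 2)) (ξ (k + 2)) (x (k + 1))
        + ((L / 2 * (1 - B ^ 2) * ‖x (k + 1) - x k‖ ^ 2 : ℝ) : EReal)
      ≤ potE f P₁ P₂ L (x (k + 1)) (ξ (k + 1)) (x k) := by
  have hprox := (hseq.isProxMin (k + 1)).potE_le_dcObjective_add_sq hfconv hfgrad hflip hP₁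
    (hseq.convexSubgradAt (k + 1))
  have hcoef : L / 2 * (β (k + 1) ^ 2 * ‖x (k + 1) - x k‖ ^ 2)
        + L / 2 * (1 - B ^ 2) * ‖x (k + 1) - x k‖ ^ 2 ≤ L / 2 * ‖x (k + 1) - x k‖ ^ 2 := by
    have hsq : β (k + 1) ^ 2 ≤ B ^ 2 := sq_le_sq' (abs_le.1 (hβ _)).1 (abs_le.1 (hβ _)).2
    have : L / 2 * (β (k + 1) ^ 2 * ‖x (k + 1) - x k‖ ^ 2)
        ≤ L / 2 * (B ^ 2 * ‖x (k + 1) - x k‖ ^ 2) := by gcongr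
    linarith
  rw [sq_norm_sub_extrapolation_succ] at hprox
  calc potE f P₁ P₂ L (x (k + 2)) (ξ (k + 2)) (x (k + 1))
        + ((L / 2 * (1 - B ^ 2) * ‖x (k + 1) - x k‖ ^ 2 : ℝ) : EReal)
      ≤ dcObjective f P₁ P₂ (x (k + 1))
          + ((L / 2 * (β (k + 1) ^ 2 * ‖x (k + 1) - x k‖ ^ 2) : ℝ) : EReal)
          + ((L / 2 * (1 - B ^ 2) * ‖x (k + 1) - x k‖ ^ 2 : ℝ) : EReal) := by gcongr
    _ ≤ dcObjective f P₁ P₂ (x (k + 1)) + ((L / 2 * ‖x (k + 1) - x k‖ ^ 2 : ℝ) : EReal) := by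
        rw [add_assoc, ← EReal.coe_add]
        gcongr
    _ ≤ potE f P₁ P₂ L (x (k + 1)) (ξ (k + 1)) (x k) := dcObjective_add_sq_le_potE _ _ _

theorem exists_tendsto_potE_and_tendsto_sub_zero [CompleteSpace H]
    (hseq : IsPDCAe f' P₁ P₂ L β x ξ) (hL : 0 < L) (hfconv : ConvexOn ℝ univ f)
    (hfgrad : ∀ y, HasGradientAt f (f' y) y) (hflip : ∀ y z, ‖f' y - f' z‖ ≤ L * ‖y - z‖)
    (hP₁ : ProperClosedConvexE P₁) (hβ : ∀ k, |β k| ≤ B) (hB : B < 1) {m : ℝ}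
    (hbdd : ∀ z, (m : EReal) ≤ dcObjective f P₁ P₂ z) :
    (∃ ζ : ℝ, Tendsto (fun k => potE f P₁ P₂ L (x (k + 1)) (ξ (k + 1)) (x k)) atTop
      (𝓝 (ζ : EReal))) ∧ Tendsto (fun k => x (k + 1) - x k) atTop (𝓝 0) := by
  have hm (k : ℕ) : (m : EReal) ≤ potE f P₁ P₂ L (x (k + 1)) (ξ (k + 1)) (x k) :=
    coe_le_potE_of_forall_coe_le_dcObjective hL.le hbdd _ _ _
  obtain ⟨e, he⟩ : ∃ e : ℕ → ℝ, ∀ k, potE f P₁ P₂ L (x (k + 1)) (ξ (k + 1)) (x k) = e k :=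
    ⟨_, fun k => (EReal.coe_toReal (hseq.potE_ne_top k)
      (ne_bot_of_le_ne_bot (EReal.coe_ne_bot m) (hm k))).symm⟩
  have hc : 0 < L / 2 * (1 - B ^ 2) :=
    mul_pos (half_pos hL) (sub_pos.2 ((sq_lt_one_iff₀ ((abs_nonneg _).trans (hβ 0))).2 hB))
  obtain ⟨⟨ζ, hζ⟩, hsq⟩ := exists_tendsto_and_tendsto_zero_of_add_le
    (d := fun k => L / 2 * (1 - B ^ 2) * ‖x (k + 1) - x k‖ ^ 2) (fun k => by positivity)
    (fun k => by
      have hstep := hseq.potE_succ_add_sq_le hL.le hfconv hfgrad hflip hP₁ hβ k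
      rw [he k, he (k + 1)] at hstep
      exact_mod_cast hstep)
    ⟨m, forall_mem_range.2 fun k => EReal.coe_le_coe_iff.1 ((hm k).trans_eq (he k))⟩
  refine ⟨⟨ζ, (EReal.tendsto_coe.2 hζ).congr fun k => (he k).symm⟩, ?_⟩
  have hsq' : Tendsto (fun k => ‖x (k + 1) - x k‖ ^ 2) atTop (𝓝 0) := by
    rw [← mul_zero (L / 2 * (1 - B ^ 2))⁻¹]
    exact (hsq.const_mul _).congr fun k => inv_mul_cancel_left₀ hc.ne' _
  rw [tendsto_zero_iff_norm_tendsto_zero]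
  simpa only [Real.sqrt_sq (norm_nonneg _), Real.sqrt_zero] using hsq'.sqrt

theorem tendsto_potE_of_tendsto (hseq : IsPDCAe f' P₁ P₂ L β x ξ) {l : Filter ℕ} [l.NeBot]
    {a b : H} (hf : ContinuousAt f a) (hf' : ContinuousAt f' a)
    (hP₁ : LowerSemicontinuousAt P₁ a) (hP₂ : ContinuousAt P₂ a)
    (hx : Tendsto x l (𝓝 a)) (hx_succ : Tendsto (fun k => x (k + 1)) l (𝓝 a))
    (hu : Tendsto (extrapolation β x) l (𝓝 a)) (hξ : Tendsto (fun k => ξ (k + 1)) l (𝓝 b)) :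
    Tendsto (fun k => potE f P₁ P₂ L (x (k + 1)) (ξ (k + 1)) (x k)) l
      (𝓝 (potE f P₁ P₂ L a b a)) := by
  have hP₁_tendsto : Tendsto (fun k => P₁ (x (k + 1))) l (𝓝 (P₁ a)) :=
    IsProxMin.tendsto hseq.isProxMin hP₁ ((hf'.tendsto.comp hu).sub hξ) hu hx_succ
  have hsub : ConvexSubgradAt P₂ b a :=
    ConvexSubgradAt.of_tendsto hseq.convexSubgradAt hP₂ hξ hx
  simp only [(hseq.convexSubgradAt _).potE_eq, hsub.potE_eq]
  exact tendsto_coe_add ((((hf.tendsto.comp hx_succ).sub (hP₂.tendsto.comp hx)).sub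
    (hξ.inner (hx_succ.sub hx))).add (((hx_succ.sub hx).norm.pow 2).const_mul (L / 2)))
    hP₁_tendsto

end IsPDCAe

theorem mapClusterPt_of_mapClusterPt_mkTrip {n : ℕ} {ι : Type*} {l : Filter ι}
    {a b w : ι → Eucl n} {p : Trip n} (hp : MapClusterPt p l fun i => mkTrip (a i) (b i) (w i)) :
    MapClusterPt (p.fst, p.snd.fst, p.snd.snd) l fun i => (a i, b i, w i) := by
  have hcont : Continuous fun q : Trip n => (q.fst, q.snd.fst, q.snd.snd) := by fun_prop
  exact hp.continuousAt_comp hcont.continuousAt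

theorem pDCAe_potE_limit_const_on_accumulation_general [CompleteSpace H]
    {f : H → ℝ} {f' : H → H} {P₁ : H → EReal} {P₂ : H → ℝ} {L B m : ℝ} {β : ℕ → ℝ} {x ξ : ℕ → H}
    (hL : 0 < L) (hfconv : ConvexOn ℝ univ f) (hfgrad : ∀ y, HasGradientAt f (f' y) y)
    (hflip : ∀ y z, ‖f' y - f' z‖ ≤ L * ‖y - z‖) (hP₁ : ProperClosedConvexE P₁)
    (hP₂ : Continuous P₂) (hβ : ∀ k, |β k| ≤ B) (hB : B < 1)
    (hbdd : ∀ z, (m : EReal) ≤ dcObjective f P₁ P₂ z) (hseq : IsPDCAe f' P₁ P₂ L β x ξ) :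
    ∃ ζ : ℝ, Tendsto (fun k => potE f P₁ P₂ L (x (k + 1)) (ξ (k + 1)) (x k)) atTop
        (𝓝 (ζ : EReal)) ∧
      ∀ a b w, MapClusterPt (a, b, w) atTop (fun k => (x (k + 1), ξ (k + 1), x k)) →
        potE f P₁ P₂ L a b w = ζ := by
  obtain ⟨⟨ζ, hζ⟩, hdiff⟩ := hseq.exists_tendsto_potE_and_tendsto_sub_zero hL hfconv hfgrad hflip
    hP₁ hβ hB hbdd
  refine ⟨ζ, hζ, fun a b w habw => ?_⟩
  obtain ⟨U, hU, hlim⟩ := mapClusterPt_iff_ultrafilter.1 habw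
  have hx_succ : Tendsto (fun k => x (k + 1)) U (𝓝 a) := hlim.fst_nhds
  have hξ : Tendsto (fun k => ξ (k + 1)) U (𝓝 b) := hlim.snd_nhds.fst_nhds
  have hx : Tendsto x U (𝓝 w) := hlim.snd_nhds.snd_nhds
  obtain rfl : a = w := sub_eq_zero.1 (tendsto_nhds_unique (hx_succ.sub hx) (hdiff.mono_left hU))
  have hf' : Continuous f' :=
    (LipschitzWith.of_dist_le' fun y z => by simpa only [dist_eq_norm] using hflip y z).continuous
  exact tendsto_nhds_unique
    (hseq.tendsto_potE_of_tendsto (hfgrad a).continuousAt hf'.continuousAt (hP₁.2.2.1 a)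
      hP₂.continuousAt hx hx_succ (tendsto_extrapolation hβ hdiff hU hx) hξ)
    (hζ.mono_left hU)

end PDCAe

/-- Proposition 1(iii): the limit `ζ` of `E(xᵏ, ξᵏ, xᵏ⁻¹)` exists and `E ≡ ζ` on the set `Υ`
of accumulation points of `{(xᵏ, ξᵏ, xᵏ⁻¹)}`. -/
theorem pDCAe_potE_limit_const_on_accumulation
    {n : ℕ} (f : Eucl n → ℝ) (f' : Eucl n → Eucl n) (P₁ : Eucl n → EReal)
    (P₂ : Eucl n → ℝ) (L : ℝ) (β : ℕ → ℝ) (x ξ : ℕ → Eucl n)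
    (hL : 0 < L)
    (hfconv : ConvexOn ℝ Set.univ f)
    (hfgrad : ∀ y, HasGradientAt f (f' y) y)
    (hflip : ∀ y z, ‖f' y - f' z‖ ≤ L * ‖y - z‖)
    (hP₁ : ProperClosedConvexE P₁)
    (hP₂cont : Continuous P₂)
    (hP₂conv : ConvexOn ℝ Set.univ P₂)
    (hβ : ∀ k, β k ∈ Set.Ico (0:ℝ) 1)
    (hβsup : ∃ B < (1:ℝ), ∀ k, β k ≤ B)
    (hlevel : ∀ γ : ℝ, IsBounded {y : Eucl n |
      ((f y : ℝ) : EReal) + P₁ y - ((P₂ y : ℝ) : EReal) ≤ (γ : EReal)})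
    (hseq : IsPDCAe f' P₁ P₂ L β x ξ)
    : ∃ ζ : EReal,
      Tendsto (fun k : ℕ => potE f P₁ P₂ L (x (k + 1)) (ξ (k + 1)) (x k)) atTop (𝓝 ζ) ∧
      ∀ p ∈ {p : Trip n |
          MapClusterPt p atTop (fun k : ℕ => mkTrip (x (k + 1)) (ξ (k + 1)) (x k))},
        potE3 f P₁ P₂ L p = ζ := by
  obtain ⟨B, hB, hβB⟩ := hβsup
  have hfcont : Continuous f := continuous_iff_continuousAt.2 fun y => (hfgrad y).continuousAt
  obtain ⟨m, hm⟩ := exists_forall_coe_le_dcObjective hfcont hP₁.2.2.1 hP₁.1 hP₂cont (hlevel 0)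
  obtain ⟨ζ, hζ, hconst⟩ := pDCAe_potE_limit_const_on_accumulation_general hL hfconv hfgrad hflip
    hP₁ hP₂cont (fun k => (abs_of_nonneg (hβ k).1).trans_le (hβB k)) hB hm hseq
  exact ⟨ζ, hζ, fun p hp => hconst _ _ _ (mapClusterPt_of_mapClusterPt_mkTrip hp)⟩
end
end

section
/- Let F(x) = f(x) + P₁(x) − P₂(x) be level-bounded, and let {x^k} and {ξ^k} be the sequences generated by pDCA_e for minimizing F. Then there exists D > 0 such that for every k ≥ 1, dist(0, ∂E(x^k, ξ^k, x^{k−1})) ≤ D(‖x^k − x^{k−1}‖ + ‖x^{k−1} − x^{k−2}‖), where ∂E denotes the limiting subdifferential of E. In particular, for every k ≥ 1 the vector (∇f(x^k) − ∇f(u^{k−1}) − L(x^{k−1} − u^{k−1}), x^{k−1} − x^k, −L(x^k − x^{k−1})) belongs to ∂E(x^k, ξ^k, x^{k−1}). -/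
/-!
Up to reordering, `E(x, y, w) = (P₁(x) + P₂*(y)) + (f(x) - ⟪x, y⟫ + L/2 ‖x - w‖²)`: a separable
function plus a differentiable one. Since Fréchet subgradients add up, and a gradient is one, a
Fréchet subgradient of `E` at `(x^k, ξ^k, x^{k-1})` is obtained from one of `P₁` at `x^k` and one of
`P₂*` at `ξ^k`. Fermat's rule for the proximal subproblem provides
`ξ^k - ∇f(u^{k-1}) - L (x^k - u^{k-1})` as the former, and conjugate duality turns
`ξ^k ∈ ∂P₂(x^{k-1})` into `x^{k-1} ∈ ∂P₂*(ξ^k)`, the latter. The resulting vector is the claimed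
element of `∂E`; its norm bounds the distance of `0` to `∂E`, and is estimated by the Lipschitz
continuity of `∇f` and the boundedness of `β`.
-/

open Filter Topology Set Metric Bornology
open scoped RealInnerProductSpace

noncomputable section

variable {H : Type*} [NormedAddCommGroup H] [InnerProductSpace ℝ H]

section FrechetCalculus

variable {F : Type*} [NormedAddCommGroup F] [InnerProductSpace ℝ F]
  {h k : H → EReal} {v w x : H}

theorem frechetSubgradAt_iff_eventually_nhds :
    FrechetSubgradAt h v x ↔ ∀ ε : ℝ, 0 < ε →
      ∀ᶠ y in 𝓝 x, h x + ((⟪v, y - x⟫ - ε * ‖y - x‖ : ℝ) : EReal) ≤ h y := by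
  refine forall₂_congr fun ε _ => ⟨fun hev => ?_, fun hev => hev.filter_mono nhdsWithin_le_nhds⟩
  filter_upwards [eventually_nhdsWithin_iff.1 hev] with y hy
  obtain rfl | hne := eq_or_ne y x
  · simp
  · exact hy hne

theorem FrechetSubgradAt.mem_limSubdiff (hv : FrechetSubgradAt h v x) : v ∈ limSubdiff h x :=
  ⟨fun _ => x, fun _ => v, tendsto_const_nhds, tendsto_const_nhds, tendsto_const_nhds, fun _ => hv⟩

theorem FrechetSubgradAt.add (hv : FrechetSubgradAt h v x) (hw : FrechetSubgradAt k w x) :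
    FrechetSubgradAt (fun y => h y + k y) (v + w) x := by
  intro ε hε
  filter_upwards [hv (ε / 2) (half_pos hε), hw (ε / 2) (half_pos hε)] with y hvy hwy
  have hsplit : ⟪v + w, y - x⟫ - ε * ‖y - x‖
      = (⟪v, y - x⟫ - ε / 2 * ‖y - x‖) + (⟪w, y - x⟫ - ε / 2 * ‖y - x‖) := by
    rw [inner_add_left]
    ring
  rw [hsplit, EReal.coe_add, add_add_add_comm]
  exact add_le_add hvy hwy

theorem FrechetSubgradAt.prod {l : F → EReal} {z t : F} (hv : FrechetSubgradAt h v x)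
    (ht : FrechetSubgradAt l t z) :
    FrechetSubgradAt (fun p : WithLp 2 (H × F) => h p.fst + l p.snd)
      (WithLp.toLp 2 (v, t)) (WithLp.toLp 2 (x, z)) := by
  rw [frechetSubgradAt_iff_eventually_nhds] at hv ht ⊢
  intro ε hε
  have hfst := (WithLp.fstL 2 ℝ H F).continuous.tendsto (WithLp.toLp 2 (x, z))
  have hsnd := (WithLp.sndL 2 ℝ H F).continuous.tendsto (WithLp.toLp 2 (x, z))
  filter_upwards [hfst.eventually (hv (ε / 2) (half_pos hε)),
    hsnd.eventually (ht (ε / 2) (half_pos hε))] with p hvp htp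
  set d := p - WithLp.toLp 2 (x, z)
  have hinner : ⟪WithLp.toLp 2 (v, t), d⟫ = ⟪v, p.fst - x⟫ + ⟪t, p.snd - z⟫ := rfl
  have hx : ‖p.fst - x‖ ≤ ‖d‖ := WithLp.norm_fst_le _ d
  have hz : ‖p.snd - z‖ ≤ ‖d‖ := WithLp.norm_snd_le _ d
  have hsplit : ⟪WithLp.toLp 2 (v, t), d⟫ - ε * ‖d‖
      ≤ (⟪v, p.fst - x⟫ - ε / 2 * ‖p.fst - x‖) + (⟪t, p.snd - z⟫ - ε / 2 * ‖p.snd - z‖) := by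
    nlinarith
  calc h x + l z + ((⟪WithLp.toLp 2 (v, t), d⟫ - ε * ‖d‖ : ℝ) : EReal)
      ≤ h x + l z + (((⟪v, p.fst - x⟫ - ε / 2 * ‖p.fst - x‖)
          + (⟪t, p.snd - z⟫ - ε / 2 * ‖p.snd - z‖) : ℝ) : EReal) := by gcongr
    _ = (h x + ((⟪v, p.fst - x⟫ - ε / 2 * ‖p.fst - x‖ : ℝ) : EReal))
          + (l z + ((⟪t, p.snd - z⟫ - ε / 2 * ‖p.snd - z‖ : ℝ) : EReal)) := by
      rw [EReal.coe_add, add_add_add_comm]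
    _ ≤ h p.fst + l p.snd := add_le_add hvp htp

theorem frechetSubgradAt_of_hasFDerivAt {g : H → ℝ} (hg : HasFDerivAt g (innerSL ℝ v) x) :
    FrechetSubgradAt (fun y => (g y : EReal)) v x := by
  rw [frechetSubgradAt_iff_eventually_nhds]
  intro ε hε
  filter_upwards [hg.isLittleO.def hε] with y hy
  rw [innerSL_apply_apply, Real.norm_eq_abs] at hy
  rw [← EReal.coe_add, EReal.coe_le_coe_iff]
  linarith [neg_le_of_abs_le hy]

theorem frechetSubgradAt_zero_of_isLocalMin (hmin : IsLocalMin h x) : FrechetSubgradAt h 0 x := by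
  rw [frechetSubgradAt_iff_eventually_nhds]
  intro ε hε
  filter_upwards [hmin] with y hy
  have hslope : ⟪(0 : H), y - x⟫ - ε * ‖y - x‖ ≤ 0 := by
    rw [inner_zero_left, zero_sub, neg_nonpos]
    positivity
  exact (add_le_of_nonpos_right (EReal.coe_nonpos.2 hslope)).trans hy

theorem frechetSubgradAt_neg_of_isLocalMin_add {g : H → ℝ} (hg : HasFDerivAt g (innerSL ℝ v) x)
    (hmin : IsLocalMin (fun y => (g y : EReal) + h y) x) : FrechetSubgradAt h (-v) x := by
  have hneg : FrechetSubgradAt (fun y => ((-g y : ℝ) : EReal)) (-v) x :=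
    frechetSubgradAt_of_hasFDerivAt (hg.neg.congr_fderiv (map_neg _ v).symm)
  have hcancel (y : H) : (g y : EReal) + h y + ((-g y : ℝ) : EReal) = h y := by
    rw [add_right_comm, ← EReal.coe_add, add_neg_cancel, EReal.coe_zero, zero_add]
  simpa only [zero_add, hcancel] using (frechetSubgradAt_zero_of_isLocalMin hmin).add hneg

theorem ConvexSubgradAtE.frechetSubgradAt (hv : ConvexSubgradAtE h v x) :
    FrechetSubgradAt h v x := by
  refine fun ε hε => Eventually.of_forall fun y => le_trans ?_ (hv y)
  have hle : ⟪v, y - x⟫ - ε * ‖y - x‖ ≤ ⟪v, y - x⟫ := sub_le_self _ (by positivity)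
  gcongr

end FrechetCalculus

section Conjugate

variable {g : H → ℝ} {v x : H}

theorem coe_inner_sub_le_conjE (g : H → ℝ) (x y : H) : ((⟪x, y⟫ - g x : ℝ) : EReal) ≤ conjE g y :=
  le_iSup (fun z : H => ((⟪z, y⟫ - g z : ℝ) : EReal)) x

theorem ConvexSubgradAt.conjE_eq_s3 (hv : ConvexSubgradAt g v x) :
    conjE g v = ((⟪x, v⟫ - g x : ℝ) : EReal) := by
  refine le_antisymm (iSup_le fun z => EReal.coe_le_coe_iff.2 ?_) (coe_inner_sub_le_conjE g x v)
  have hz := hv z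
  rw [inner_sub_right, real_inner_comm, real_inner_comm x v] at hz
  linarith

theorem ConvexSubgradAt.convexSubgradAtE_conjE (hv : ConvexSubgradAt g v x) :
    ConvexSubgradAtE (conjE g) x v := by
  intro y
  have hshift : ⟪x, v⟫ - g x + ⟪x, y - v⟫ = ⟪x, y⟫ - g x := by
    rw [inner_sub_right]
    ring
  rw [hv.conjE_eq_s3, ← EReal.coe_add, hshift]
  exact coe_inner_sub_le_conjE g x y

end Conjugate

section Potential

/-- The point `(a, b, c)` of the ℓ² product of three copies of `H`, nested as in `Trip`. -/
def triple (a b c : H) : WithLp 2 (H × WithLp 2 (H × H)) :=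
  WithLp.toLp 2 (a, WithLp.toLp 2 (b, c))

/-- `potE` as a function on the ℓ² product of three copies of `H`; it extends `potE3` from `Eucl n`
to every real inner product space. -/
def potETriple (f : H → ℝ) (P₁ : H → EReal) (P₂ : H → ℝ) (L : ℝ)
    (p : WithLp 2 (H × WithLp 2 (H × H))) : EReal :=
  potE f P₁ P₂ L p.fst p.snd.fst p.snd.snd

theorem norm_triple_le {G : Type*} [SeminormedAddCommGroup G] (a b c : G) :
    ‖triple a b c‖ ≤ ‖a‖ + ‖b‖ + ‖c‖ := by
  have hsum : triple a b c = triple a 0 0 + triple 0 b 0 + triple 0 0 c := by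
    simp [triple, ← WithLp.toLp_add]
  rw [hsum]
  refine norm_add₃_le.trans_eq ?_
  simp only [triple, ← Prod.zero_eq_mk, WithLp.toLp_zero, WithLp.norm_toLp_fst,
    WithLp.norm_toLp_snd]

theorem hasFDerivAt_inner_add_sq_norm_sub (v u x : H) (L : ℝ) :
    HasFDerivAt (fun z => ⟪v, z⟫ + L / 2 * ‖z - u‖ ^ 2) (innerSL ℝ (v + L • (x - u))) x := by
  refine ((innerSL ℝ v).hasFDerivAt.add
    (((hasFDerivAt_id x).sub_const u).norm_sq.const_mul (L / 2))).congr_fderiv ?_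
  ext z
  change ⟪v, z⟫ + L / 2 * (2 • ⟪x - u, z⟫) = ⟪v + L • (x - u), z⟫
  rw [inner_add_left, real_inner_smul_left]
  ring

theorem potETriple_eq_separable_add_smooth (f : H → ℝ) (P₁ : H → EReal) (P₂ : H → ℝ) (L : ℝ)
    (p : WithLp 2 (H × WithLp 2 (H × H))) :
    potETriple f P₁ P₂ L p = P₁ p.fst + conjE P₂ p.snd.fst
      + ((f p.fst - ⟪p.fst, p.snd.fst⟫ + L / 2 * ‖p.fst - p.snd.snd‖ ^ 2 : ℝ) : EReal) := by
  rw [potETriple, potE, EReal.coe_add, EReal.coe_sub, sub_eq_add_neg,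
    sub_eq_add_neg (f p.fst : EReal)]
  ac_rfl

theorem hasFDerivAt_potE_smooth_part {f : H → ℝ} {v a : H} (hf : HasFDerivAt f (innerSL ℝ v) a)
    (b c : H) (L : ℝ) :
    HasFDerivAt (fun p : WithLp 2 (H × WithLp 2 (H × H)) =>
        f p.fst - ⟪p.fst, p.snd.fst⟫ + L / 2 * ‖p.fst - p.snd.snd‖ ^ 2)
      (innerSL ℝ (triple (v - b + L • (a - c)) (-a) (-(L • (a - c))))) (triple a b c) := by
  let X := WithLp.fstL 2 ℝ H (WithLp 2 (H × H))
  let Y := (WithLp.fstL 2 ℝ H H).comp (WithLp.sndL 2 ℝ H (WithLp 2 (H × H)))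
  let W := (WithLp.sndL 2 ℝ H H).comp (WithLp.sndL 2 ℝ H (WithLp 2 (H × H)))
  have hX := X.hasFDerivAt (x := triple a b c)
  have hY := Y.hasFDerivAt (x := triple a b c)
  have hW := W.hasFDerivAt (x := triple a b c)
  have hfX : HasFDerivAt (fun p => f (X p)) ((innerSL ℝ v).comp X) (triple a b c) :=
    HasFDerivAt.comp (triple a b c) hf hX
  refine ((hfX.sub (hX.inner ℝ hY)).add ((hX.sub hW).norm_sq.const_mul (L / 2))).congr_fderiv ?_
  ext p
  change ⟪v, X p⟫ - (⟪a, Y p⟫ + ⟪X p, b⟫) + L / 2 * (2 • ⟪a - c, X p - W p⟫)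
    = ⟪v - b + L • (a - c), X p⟫ + (⟪-a, Y p⟫ + ⟪-(L • (a - c)), W p⟫)
  rw [inner_sub_right, inner_add_left, inner_sub_left v, inner_neg_left, inner_neg_left,
    real_inner_smul_left, real_inner_smul_left, real_inner_comm b]
  ring

theorem frechetSubgradAt_potETriple {f : H → ℝ} {P₁ : H → EReal} {P₂ : H → ℝ} {v g w a b : H}
    (hf : HasFDerivAt f (innerSL ℝ v) a) (hg : FrechetSubgradAt P₁ g a)
    (hw : FrechetSubgradAt (conjE P₂) w b) (c : H) (L : ℝ) :
    FrechetSubgradAt (potETriple f P₁ P₂ L)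
      (triple (g + (v - b + L • (a - c))) (w - a) (-(L • (a - c)))) (triple a b c) := by
  have hzero : FrechetSubgradAt (fun _ : H => (0 : EReal)) 0 c :=
    frechetSubgradAt_zero_of_isLocalMin isLocalMin_const
  have hsum := (hg.prod (hw.prod hzero)).add
    (frechetSubgradAt_of_hasFDerivAt (hasFDerivAt_potE_smooth_part hf b c L))
  have hvec : WithLp.toLp 2 (g, WithLp.toLp 2 (w, 0))
      + triple (v - b + L • (a - c)) (-a) (-(L • (a - c)))
      = triple (g + (v - b + L • (a - c))) (w - a) (-(L • (a - c))) := by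
    simp only [triple, ← WithLp.toLp_add, Prod.mk_add_mk, sub_eq_add_neg, zero_add]
  have hfun : potETriple f P₁ P₂ L = _ := funext (potETriple_eq_separable_add_smooth f P₁ P₂ L)
  simp only [add_zero] at hsum
  rwa [hfun, ← hvec]

end Potential

section Iteration

/-- The extrapolated point `u^k = x^k + β_k (x^k - x^{k-1})` of pDCAe, with `x^{-1} = x^0` encoded
by truncated subtraction as in `IsPDCAe`. -/
def extrapolate (β : ℕ → ℝ) (x : ℕ → H) (k : ℕ) : H :=
  x k + β k • (x k - x (k - 1))

/-- The subgradient of `E` produced by a pDCAe step from the iterate `x` to `x'` with extrapolated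
point `u`; it is taken at `(x', ξ', x)`, where `ξ'` is the subgradient of `P₂` chosen at `x`. -/
def pdcaSubgrad (f' : H → H) (L : ℝ) (u x x' : H) : WithLp 2 (H × WithLp 2 (H × H)) :=
  triple (f' x' - f' u - L • (x - u)) (x - x') (-(L • (x' - x)))

variable {f : H → ℝ} {f' : H → H} {P₁ : H → EReal} {P₂ : H → ℝ} {L : ℝ} {β : ℕ → ℝ} {x ξ : ℕ → H}

theorem IsPDCAe.frechetSubgradAt_potETriple (hseq : IsPDCAe f' P₁ P₂ L β x ξ) {k : ℕ}
    (hf : HasFDerivAt f (innerSL ℝ (f' (x (k + 1)))) (x (k + 1))) :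
    FrechetSubgradAt (potETriple f P₁ P₂ L)
      (pdcaSubgrad f' L (extrapolate β x k) (x k) (x (k + 1)))
      (triple (x (k + 1)) (ξ (k + 1)) (x k)) := by
  obtain ⟨-, hξ, hmin⟩ := hseq
  have hP₁ := frechetSubgradAt_neg_of_isLocalMin_add
    (hasFDerivAt_inner_add_sq_norm_sub (f' (extrapolate β x k) - ξ (k + 1)) (extrapolate β x k)
      (x (k + 1)) L) (Eventually.of_forall (hmin k))
  have hP₂ := (hξ k).convexSubgradAtE_conjE.frechetSubgradAt
  convert _root_.frechetSubgradAt_potETriple hf hP₁ hP₂ (x k) L using 1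
  rw [pdcaSubgrad]
  congr 1
  module

theorem norm_pdcaSubgrad_le {K : NNReal} (hlip : LipschitzWith K f') (L : ℝ) {B : ℝ}
    {k : ℕ} (hβ : |β k| ≤ B) (x : ℕ → H) :
    ‖pdcaSubgrad f' L (extrapolate β x k) (x k) (x (k + 1))‖
      ≤ ((K + |L|) * (1 + B) + 1) * (‖x (k + 1) - x k‖ + ‖x k - x (k - 1)‖) := by
  set u := extrapolate β x k with hu
  set s := ‖x (k + 1) - x k‖
  set t := ‖x k - x (k - 1)‖
  have hB : 0 ≤ B := (abs_nonneg (β k)).trans hβ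
  have hextra : ‖x k - u‖ ≤ B * t := by
    rw [hu, extrapolate, sub_add_cancel_left, norm_neg, norm_smul, Real.norm_eq_abs]
    gcongr
  have hstep : ‖x (k + 1) - u‖ ≤ s + B * t :=
    (norm_sub_le_norm_sub_add_norm_sub _ (x k) _).trans (by gcongr)
  have hgrad : ‖f' (x (k + 1)) - f' u‖ ≤ K * (s + B * t) :=
    (hlip.norm_sub_le _ _).trans (by gcongr)
  have hprox : ‖L • (x k - u)‖ ≤ |L| * (B * t) := by
    rw [norm_smul, Real.norm_eq_abs]
    gcongr
  have hcoupling : ‖-(L • (x (k + 1) - x k))‖ = |L| * s := by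
    rw [norm_neg, norm_smul, Real.norm_eq_abs]
  calc ‖pdcaSubgrad f' L u (x k) (x (k + 1))‖
      ≤ ‖f' (x (k + 1)) - f' u - L • (x k - u)‖ + ‖x k - x (k + 1)‖
          + ‖-(L • (x (k + 1) - x k))‖ := norm_triple_le _ _ _
    _ ≤ K * (s + B * t) + |L| * (B * t) + s + |L| * s := by
      rw [hcoupling, norm_sub_rev (x k)]
      gcongr
      exact norm_sub_le_of_le hgrad hprox
    _ ≤ ((K + |L|) * (1 + B) + 1) * (s + t) := by
      have hs : 0 ≤ (K + |L|) * (B * s) := by positivity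
      have ht : 0 ≤ (K + |L| + 1) * t := by positivity
      linarith

theorem pDCAe_potE_subdiff_bound_general {K : NNReal} {B : ℝ}
    (hfgrad : ∀ y, HasFDerivAt f (innerSL ℝ (f' y)) y) (hlip : LipschitzWith K f')
    (_hP₁ : ∀ y, P₁ y ≠ ⊥) (hβ : ∀ k, |β k| ≤ B) (hseq : IsPDCAe f' P₁ P₂ L β x ξ) :
    (∃ D > (0 : ℝ), ∀ k : ℕ, 1 ≤ k →
        infDist 0 (limSubdiff (potETriple f P₁ P₂ L) (triple (x k) (ξ k) (x (k - 1))))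
          ≤ D * (‖x k - x (k - 1)‖ + ‖x (k - 1) - x (k - 2)‖)) ∧
      ∀ k : ℕ, 1 ≤ k →
        pdcaSubgrad f' L (extrapolate β x (k - 1)) (x (k - 1)) (x k)
          ∈ limSubdiff (potETriple f P₁ P₂ L) (triple (x k) (ξ k) (x (k - 1))) := by
  have hmem (k : ℕ) (hk : 1 ≤ k) : pdcaSubgrad f' L (extrapolate β x (k - 1)) (x (k - 1)) (x k)
      ∈ limSubdiff (potETriple f P₁ P₂ L) (triple (x k) (ξ k) (x (k - 1))) := by
    obtain ⟨j, rfl⟩ := Nat.exists_eq_add_of_le' hk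
    exact (hseq.frechetSubgradAt_potETriple (hfgrad _)).mem_limSubdiff
  have hB : 0 ≤ B := (abs_nonneg (β 0)).trans (hβ 0)
  refine ⟨⟨(K + |L|) * (1 + B) + 1, by positivity, fun k hk => ?_⟩, hmem⟩
  refine (infDist_le_dist_of_mem (hmem k hk)).trans ?_
  obtain ⟨j, rfl⟩ := Nat.exists_eq_add_of_le' hk
  rw [dist_zero_left]
  exact norm_pdcaSubgrad_le hlip L (hβ j) x

end Iteration

/-- Proposition 1(iv): subgradient bound for the potential function `E` along pDCAe. -/
theorem pDCAe_potE_subdiff_bound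
    {n : ℕ} (f : Eucl n → ℝ) (f' : Eucl n → Eucl n) (P₁ : Eucl n → EReal)
    (P₂ : Eucl n → ℝ) (L : ℝ) (β : ℕ → ℝ) (x ξ : ℕ → Eucl n)
    (hL : 0 < L)
    (hfconv : ConvexOn ℝ Set.univ f)
    (hfgrad : ∀ y, HasGradientAt f (f' y) y)
    (hflip : ∀ y z, ‖f' y - f' z‖ ≤ L * ‖y - z‖)
    (hP₁ : ProperClosedConvexE P₁)
    (hP₂cont : Continuous P₂)
    (hP₂conv : ConvexOn ℝ Set.univ P₂)
    (hβ : ∀ k, β k ∈ Set.Ico (0:ℝ) 1)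
    (hβsup : ∃ B < (1:ℝ), ∀ k, β k ≤ B)
    (hlevel : ∀ γ : ℝ, IsBounded {y : Eucl n |
      ((f y : ℝ) : EReal) + P₁ y - ((P₂ y : ℝ) : EReal) ≤ (γ : EReal)})
    (hseq : IsPDCAe f' P₁ P₂ L β x ξ)
    : (∃ D > (0:ℝ), ∀ k : ℕ, 1 ≤ k →
        infDist (0 : Trip n)
            (limSubdiff (potE3 f P₁ P₂ L) (mkTrip (x k) (ξ k) (x (k - 1))))
          ≤ D * (‖x k - x (k - 1)‖ + ‖x (k - 1) - x (k - 2)‖)) ∧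
      ∀ k : ℕ, 1 ≤ k →
        mkTrip
            (f' (x k) - f' (x (k - 1) + β (k - 1) • (x (k - 1) - x (k - 2)))
              - L • (x (k - 1) - (x (k - 1) + β (k - 1) • (x (k - 1) - x (k - 2)))))
            (x (k - 1) - x k)
            (-(L • (x k - x (k - 1))))
          ∈ limSubdiff (potE3 f P₁ P₂ L) (mkTrip (x k) (ξ k) (x (k - 1))) := by
  have hlip : LipschitzWith L.toNNReal f' :=
    LipschitzWith.of_dist_le' fun y z => by simpa only [dist_eq_norm] using hflip y z
  exact pDCAe_potE_subdiff_bound_general hfgrad hlip hP₁.1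
    (fun k => (abs_of_nonneg (hβ k).1).trans_le (hβ k).2.le) hseq
end
end
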